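/- arXiv:math/0211366 — 7 statements merged into one kernel-verified Lean document; each statement's English description precedes it below -/
import Mathlib

section
/- Let R be a commutative ring and x, y ∈ R. Then for every n ≥ 0, F_{n+1}² + y·F_n² = F_{2n+1}. -/
/-- Bivariate Fibonacci polynomials: `F 0 = 0`, `F 1 = 1`, `F (n+2) = x*F (n+1) + y*F n`. -/
def bF {R : Type*} [CommRing R] (x y : R) : ℕ → R
  | 0 => 0
  | 1 => 1
  | n + 2 => x * bF x y (n + 1) + y * bF x y n

/-- The two-term linear recurrence `u (n + 2) = x • u (n + 1) + y • u n`. Since `u` takes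
values in a left module, the Fibonacci polynomials can act as coefficients on any other solution. -/
def IsTwoTermRecurrence {R M : Type*} [Semiring R] [AddCommMonoid M] [Module R M]
    (x y : R) (u : ℕ → M) : Prop :=
  ∀ n, u (n + 2) = x • u (n + 1) + y • u n

section Semiring

variable {R M : Type*} [Semiring R] [AddCommMonoid M] [Module R M] {x y : R} {F : ℕ → R}

-- As `x` and `y` need not commute, the order in `F n * y` matters: `y` comes from expanding
-- `u (m + 2)` and so acts on `u m` before the later steps collected in `F n`.
theorem IsTwoTermRecurrence.apply_add_add_one {u : ℕ → M} (hu : IsTwoTermRecurrence x y u)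
    (hF : IsTwoTermRecurrence x y F) (hF₀ : F 0 = 0) (hF₁ : F 1 = 1) (m n : ℕ) :
    u (m + n + 1) = F (n + 1) • u (m + 1) + (F n * y) • u m := by
  induction n using Nat.twoStepInduction with
  | zero => simp [hF₀, hF₁]
  | one => simp [hF 0, hF₀, hF₁, hu m]
  | more n ih ih' =>
    calc u (m + n + 1 + 2)
        = x • u (m + (n + 1) + 1) + y • u (m + n + 1) := hu (m + n + 1)
      _ = x • (F (n + 2) • u (m + 1) + (F (n + 1) * y) • u m) +
            y • (F (n + 1) • u (m + 1) + (F n * y) • u m) := by rw [ih', ih]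
      _ = (x * F (n + 2) + y * F (n + 1)) • u (m + 1) +
            ((x * F (n + 1) + y * F n) * y) • u m := by
        simp only [smul_add, add_smul, add_mul, smul_smul, mul_assoc]
        abel
      _ = F (n + 3) • u (m + 1) + (F (n + 2) * y) • u m := by
        simp only [hF (n + 1), hF n, smul_eq_mul]

theorem fib_sq_add_general (hF : IsTwoTermRecurrence x y F) (hF₀ : F 0 = 0) (hF₁ : F 1 = 1)
    (n : ℕ) : F (n + 1) ^ 2 + F n * y * F n = F (2 * n + 1) := by
  rw [two_mul, hF.apply_add_add_one hF hF₀ hF₁, sq, smul_eq_mul, smul_eq_mul]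

end Semiring

theorem isTwoTermRecurrence_bF {R : Type*} [CommRing R] (x y : R) :
    IsTwoTermRecurrence x y (bF x y) :=
  fun _ => rfl

/-- For every `n ≥ 0`, `F (n+1) ^ 2 + y * F n ^ 2 = F (2n+1)`. -/
theorem fib_sq_add {R : Type*} [CommRing R] (x y : R) :
    ∀ n : ℕ, bF x y (n + 1) ^ 2 + y * bF x y n ^ 2 = bF x y (2 * n + 1) := by
  intro n
  rw [← fib_sq_add_general (isTwoTermRecurrence_bF x y) rfl rfl n]
  ring
end

section
/- Let K be a field, x, y ∈ K with y ≠ 0, and a₀, a₁ ∈ K. Extend H to all integer indices by requiring H_m = x·H_{m−1} + y·H_{m−2} for every integer m (equivalently H_{−n} = −(x/y)·H_{−(n−1)} + (1/y)·H_{−(n−2)}). Then for every n ≥ 0, H_{−n} = ((−1)ⁿ / yⁿ)·(a₀·F_{n+1} − a₁·F_n). -/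
section Recurrence

variable {R : Type*} [CommRing R] {x y : R}

theorem bF_add_two (x y : R) (n : ℕ) : bF x y (n + 2) = x * bF x y (n + 1) + y * bF x y n := rfl

theorem eq_bF_of_recurrence {u : ℕ → R} (hu : ∀ n, u (n + 2) = x * u (n + 1) + y * u n) (n : ℕ) :
    u n = u 0 * bF x y (n + 1) + (u 1 - x * u 0) * bF x y n := by
  induction n using Nat.twoStepInduction with
  | zero => simp [bF]
  | one => simp [bF, mul_comm]
  | more n ih ih_succ =>
    rw [hu, ih, ih_succ, bF_add_two x y (n + 1), bF_add_two x y n]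
    ring

/-- Backwards, the recurrence has coefficients `-x / y` and `1 / y`; the factor `(-y) ^ n` clears
the denominators and restores the coefficients `x` and `y`. -/
theorem neg_pow_mul_reverse_recurrence {H : ℤ → R}
    (hrec : ∀ m, H m = x * H (m - 1) + y * H (m - 2)) (k : ℤ) (n : ℕ) :
    (-y) ^ (n + 2) * H (k - (n + 2 : ℕ)) =
      x * ((-y) ^ (n + 1) * H (k - (n + 1 : ℕ))) + y * ((-y) ^ n * H (k - n)) := by
  have h := hrec (k - n)
  rw [sub_sub, sub_sub] at h
  push_cast
  linear_combination -(-y) ^ n * y * h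

theorem neg_pow_mul_reverse_eq_bF {H : ℤ → R}
    (hrec : ∀ m, H m = x * H (m - 1) + y * H (m - 2)) (k : ℤ) (n : ℕ) :
    (-y) ^ n * H (k - n) = H k * bF x y (n + 1) - H (k + 1) * bF x y n := by
  have h_solution := eq_bF_of_recurrence (u := fun n : ℕ ↦ (-y) ^ n * H (k - n))
    (neg_pow_mul_reverse_recurrence hrec k) n
  have h_succ : H (k + 1) = x * H k + y * H (k - 1) := by
    simpa only [add_sub_cancel_right, show k + 1 - 2 = k - 1 by ring] using hrec (k + 1)
  simp only [pow_zero, one_mul, pow_one, Nat.cast_zero, sub_zero, Nat.cast_one] at h_solution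
  linear_combination h_solution + bF x y n * h_succ

theorem gen_neg_index_general {H : ℤ → R}
    (hrec : ∀ m, H m = x * H (m - 1) + y * H (m - 2)) (k : ℤ) (n : ℕ) :
    y ^ n * H (k - n) = (-1) ^ n * (H k * bF x y (n + 1) - H (k + 1) * bF x y n) := by
  rw [← neg_pow_mul_reverse_eq_bF hrec, ← mul_assoc, ← mul_pow, neg_one_mul, neg_neg]

end Recurrence

/-- Extend `H` to all integer indices by the recurrence `H m = x H (m−1) + y H (m−2)`.
Then for every `n ≥ 0`, `H (−n) = ((−1)ⁿ / yⁿ) * (a₀ F (n+1) − a₁ F n)`. -/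
theorem gen_neg_index {K : Type*} [Field K] (x y a0 a1 : K) (hy : y ≠ 0)
    (H : ℤ → K) (h0 : H 0 = a0) (h1 : H 1 = a1)
    (hrec : ∀ m : ℤ, H m = x * H (m - 1) + y * H (m - 2)) :
    ∀ n : ℕ,
      H (-(n : ℤ)) = ((-1) ^ n / y ^ n) * (a0 * bF x y (n + 1) - a1 * bF x y n) := by
  intro n
  rw [div_mul_eq_mul_div, eq_div_iff (pow_ne_zero n hy), mul_comm]
  simpa only [zero_sub, zero_add, h0, h1] using gen_neg_index_general hrec 0 n
end

section
/- Let R be a commutative ring, x, y ∈ R, and a₀, a₁ ∈ R. Then for every n ≥ 1, H_n·H_{n+2} − H_{n+1}² = (−1)ⁿ·y^{n−1}·(a₀·a₁·x·y + a₀²·y² − a₁²·y) (the Simpson formula). -/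
/-- Generalized bivariate Fibonacci sequence: `H 0 = a0`, `H 1 = a1`,
`H (n+2) = x*H (n+1) + y*H n`. -/
def bH {R : Type*} [CommRing R] (x y a0 a1 : R) : ℕ → R
  | 0 => a0
  | 1 => a1
  | n + 2 => x * bH x y a0 a1 (n + 1) + y * bH x y a0 a1 n

/-!
Two solutions `u`, `v` of `w (n + 2) = p n * w (n + 1) + q n * w n` have a Casoratian
`u n * v (n + 1) - u (n + 1) * v n` that is multiplied by `-q n` at each step (Abel's identity).
The shift of a solution of a constant-coefficient recurrence is again a solution, and the
Casoratian of `H` with its own shift is `H n * H (n + 2) - H (n + 1) ^ 2`.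
-/

section Casoratian

variable {R : Type*} [CommRing R]

/-- The Casoratian (discrete Wronskian) of two sequences `u` and `v`: the determinant with rows
`(u n, v n)` and `(u (n + 1), v (n + 1))`. -/
def casoratian (u v : ℕ → R) (n : ℕ) : R :=
  u n * v (n + 1) - u (n + 1) * v n

theorem casoratian_succ {u v : ℕ → R} {p q : R} {n : ℕ}
    (hu : u (n + 2) = p * u (n + 1) + q * u n) (hv : v (n + 2) = p * v (n + 1) + q * v n) :
    casoratian u v (n + 1) = -q * casoratian u v n := by
  rw [casoratian, casoratian, hu, hv]
  ring

theorem casoratian_eq_prod_mul {u v p q : ℕ → R}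
    (hu : ∀ n, u (n + 2) = p n * u (n + 1) + q n * u n)
    (hv : ∀ n, v (n + 2) = p n * v (n + 1) + q n * v n) (n : ℕ) :
    casoratian u v n = (∏ i ∈ Finset.range n, -q i) * casoratian u v 0 := by
  induction n with
  | zero => rw [Finset.prod_range_zero, one_mul]
  | succ n ih =>
    rw [casoratian_succ (hu n) (hv n), ih, Finset.prod_range_succ_comm, mul_assoc]

theorem casoratian_eq_pow_mul {u v : ℕ → R} {p q : R}
    (hu : ∀ n, u (n + 2) = p * u (n + 1) + q * u n)
    (hv : ∀ n, v (n + 2) = p * v (n + 1) + q * v n) (n : ℕ) :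
    casoratian u v n = (-q) ^ n * casoratian u v 0 := by
  rw [casoratian_eq_prod_mul hu hv, Finset.prod_const, Finset.card_range]

theorem mul_add_two_sub_sq_of_recurrence {u : ℕ → R} {p q : R}
    (hu : ∀ n, u (n + 2) = p * u (n + 1) + q * u n) (n : ℕ) :
    u n * u (n + 2) - u (n + 1) ^ 2 = (-q) ^ n * (u 0 * u 2 - u 1 ^ 2) := by
  simpa only [casoratian, sq] using
    casoratian_eq_pow_mul (v := fun k ↦ u (k + 1)) hu (fun k ↦ hu (k + 1)) n

end Casoratian

theorem bH_add_two {R : Type*} [CommRing R] (x y a0 a1 : R) (n : ℕ) :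
    bH x y a0 a1 (n + 2) = x * bH x y a0 a1 (n + 1) + y * bH x y a0 a1 n :=
  rfl

/-- **Simpson formula.** For every `n ≥ 1`,
`H n * H (n+2) − H (n+1) ^ 2 = (−1)ⁿ y^(n−1) (a₀ a₁ x y + a₀² y² − a₁² y)`. -/
theorem simpson_formula {R : Type*} [CommRing R] (x y a0 a1 : R) :
    ∀ n : ℕ, 1 ≤ n →
      bH x y a0 a1 n * bH x y a0 a1 (n + 2) - bH x y a0 a1 (n + 1) ^ 2 =
        (-1) ^ n * y ^ (n - 1) * (a0 * a1 * x * y + a0 ^ 2 * y ^ 2 - a1 ^ 2 * y) := by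
  intro n hn
  obtain ⟨m, rfl⟩ := Nat.exists_eq_add_of_le' hn
  have simpson := mul_add_two_sub_sq_of_recurrence (bH_add_two x y a0 a1) (m + 1)
  rw [simpson, bH_add_two, bH, bH, Nat.add_sub_cancel]
  ring
end

section
/- Let x, y ∈ ℂ and let w ∈ ℂ satisfy w² = y, and let i = √(−1). Then for every n ≥ 1, F_n(x, y) = ∑_{r=0}^{n−1} C(2n−1−r, r)·(x + 2w·i)^{n−r−1}·(−w·i)^r, where C(·,·) denotes the binomial coefficient. -/
/-!
For `v² = -y` the Fibonacci polynomials have generating function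
`∑ F_{n+1} tⁿ = 1 / (1 - x t - y t²) = 1 / ((1 - b t)² - a t)` with `a = x + 2 v` and `b = -v`.
Expanding the right-hand side as the geometric series `∑ aᵏ tᵏ / (1 - b t)^(2 k + 2)` gives the
binomial sum. Here `v = w i`. To stay with finite sums, let the exponent `2 k + 2` vary: one factor
`1 - b t` then amounts to Pascal's rule, and the factor `(1 - b t)² - a t` to the Fibonacci
recurrence.
-/

open Finset

section ChooseSum

/-- The coefficient of `tⁿ` in `∑ᵢ aⁱ tⁱ / (1 - b t)^(2 i + p + 1)`. The Fibonacci polynomials are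
the case `p = 1`; the shift `p` closes the family under Pascal's rule. Summing over the antidiagonal
avoids subtraction in binomials and exponents. -/
def chooseSum {R : Type*} [CommSemiring R] (a b : R) (p n : ℕ) : R :=
  ∑ k ∈ antidiagonal n, ((2 * k.1 + p + k.2).choose k.2 : R) * a ^ k.1 * b ^ k.2

section CommSemiring

variable {R : Type*} [CommSemiring R] (a b : R)

@[simp]
theorem chooseSum_zero_right (p : ℕ) : chooseSum a b p 0 = 1 := by
  simp [chooseSum]

theorem chooseSum_succ_succ (p n : ℕ) :
    chooseSum a b (p + 1) (n + 1) = chooseSum a b p (n + 1) + b * chooseSum a b (p + 1) n := by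
  have pascal (i j : ℕ) : (2 * i + (p + 1) + (j + 1)).choose (j + 1) =
      (2 * i + (p + 1) + j).choose j + (2 * i + p + (j + 1)).choose (j + 1) := by
    rw [← add_assoc _ j, Nat.choose_succ_succ]
    congr 2
    ring
  simp only [chooseSum, Nat.sum_antidiagonal_succ', Nat.choose_zero_right, add_assoc _ (∑ _ ∈ _, _),
    mul_sum, ← sum_add_distrib]
  refine congrArg _ (sum_congr rfl fun k _ ↦ ?_)
  rw [pascal]
  push_cast
  ring

theorem chooseSum_zero_succ (n : ℕ) :
    chooseSum a b 0 (n + 1) = a * chooseSum a b 2 n + b ^ (n + 1) := by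
  simp only [chooseSum, Nat.sum_antidiagonal_succ, mul_sum, mul_add_one, pow_succ']
  simp [add_comm, mul_assoc, mul_left_comm]

theorem chooseSum_zero_add_two (n : ℕ) :
    chooseSum a b 0 (n + 2) = a * chooseSum a b 1 (n + 1) + b * chooseSum a b 0 (n + 1) :=
  calc
    chooseSum a b 0 (n + 2) = a * chooseSum a b 2 (n + 1) + b ^ (n + 2) :=
      chooseSum_zero_succ a b (n + 1)
    _ = a * chooseSum a b 1 (n + 1) + b * (a * chooseSum a b 2 n + b ^ (n + 1)) := by
      rw [chooseSum_succ_succ a b 1]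
      ring
    _ = a * chooseSum a b 1 (n + 1) + b * chooseSum a b 0 (n + 1) := by
      rw [← chooseSum_zero_succ]

theorem chooseSum_one_eq_sum_range (n : ℕ) :
    chooseSum a b 1 n = ∑ r ∈ range (n + 1),
      ((2 * (n + 1) - 1 - r).choose r : R) * a ^ (n + 1 - r - 1) * b ^ r := by
  rw [chooseSum, ← Nat.sum_antidiagonal_swap, Nat.sum_antidiagonal_eq_sum_range_succ_mk]
  refine sum_congr rfl fun r hr ↦ ?_
  have hr : r < n + 1 := mem_range.mp hr
  congr 4 <;> dsimp only [Prod.fst_swap, Prod.snd_swap] <;> omega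

end CommSemiring

variable {R : Type*} [CommRing R]

theorem chooseSum_one_add_two (a b : R) (n : ℕ) :
    chooseSum a b 1 (n + 2) =
      (a + 2 * b) * chooseSum a b 1 (n + 1) + -b ^ 2 * chooseSum a b 1 n := by
  linear_combination chooseSum_succ_succ a b 0 (n + 1) + chooseSum_zero_add_two a b n -
    b * chooseSum_succ_succ a b 0 n

theorem bF_succ_eq_chooseSum (a b : R) (n : ℕ) :
    bF (a + 2 * b) (-b ^ 2) (n + 1) = chooseSum a b 1 n := by
  induction n using Nat.twoStepInduction with
  | zero => simp [bF]
  | one =>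
    rw [chooseSum_succ_succ, chooseSum_zero_succ]
    simp only [bF, chooseSum_zero_right]
    ring
  | more n ih₀ ih₁ => rw [bF, ih₀, ih₁, chooseSum_one_add_two]

end ChooseSum

theorem complex_representation_general {R : Type*} [CommRing R] (x : R) {y v : R}
    (hv : v ^ 2 = -y) (n : ℕ) :
    bF x y n =
      ∑ r ∈ range n,
        ((2 * n - 1 - r).choose r : R) * (x + 2 * v) ^ (n - r - 1) * (-v) ^ r := by
  cases n with
  | zero => simp [bF]
  | succ n =>
    have hx : x + 2 * v + 2 * -v = x := by ring
    have hy : -(-v) ^ 2 = y := by rw [neg_sq, hv, neg_neg]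
    rw [← chooseSum_one_eq_sum_range, ← bF_succ_eq_chooseSum, hx, hy]

/-- Complex representation: if `w² = y` then for every `n ≥ 1`,
`F n (x, y) = ∑_{r=0}^{n−1} C(2n−1−r, r) (x + 2wi)^(n−r−1) (−wi)^r`. -/
theorem complex_representation (x y w : ℂ) (hw : w ^ 2 = y) :
    ∀ n : ℕ, 1 ≤ n →
      bF x y n =
        ∑ r ∈ Finset.range n,
          (Nat.choose (2 * n - 1 - r) r : ℂ) *
            (x + 2 * w * Complex.I) ^ (n - r - 1) * (-(w * Complex.I)) ^ r := by
  intro n _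
  have hv : (w * Complex.I) ^ 2 = -y := by rw [mul_pow, Complex.I_sq, hw, mul_neg_one]
  simpa only [mul_assoc] using complex_representation_general x hv n
end

section
/- Let R be a commutative ring and x, y ∈ R. Then for all n ≥ 0 and m ≥ 1: if m is odd, L_n^m = ∑_{k=0}^{⌊m/2⌋} C(m, k)·(−y)^{k·n}·L_{n·(m−2k)}, and if m is even, L_n^m = ∑_{k=0}^{m/2 − 1} C(m, k)·(−y)^{k·n}·L_{n·(m−2k)} + C(m, m/2)·(−y)^{m·n/2}, where C(·,·) denotes the binomial coefficient. -/
/-- Bivariate Lucas polynomials: `L 0 = 2`, `L 1 = x`, `L (n+2) = x*L (n+1) + y*L n`. -/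
def bL {R : Type*} [CommRing R] (x y : R) : ℕ → R
  | 0 => 2
  | 1 => x
  | n + 2 => x * bL x y (n + 1) + y * bL x y n

/-!
In the quadratic algebra `R[ω]` with `ω² = y + xω`, which contains `R`, the element `ω` has trace
`x` and norm `-y`, and `L n` is the trace of `ω ^ n`. With `z = ω ^ n`, the power `L n ^ m` is thus
`(z + star z) ^ m`, and in its binomial expansion the terms of index `k` and `m - k` add up to
`C(m, k)` times the `k`-th power of the norm of `z` times the trace of `z ^ (m - 2k)`.
-/

section Folding

variable {M : Type*} [AddCommMonoid M] (f : ℕ → M) (n : ℕ)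

theorem sum_range_two_mul_eq_sum_add_reflect :
    ∑ i ∈ Finset.range (2 * n), f i = ∑ i ∈ Finset.range n, (f i + f (2 * n - 1 - i)) := by
  rw [two_mul, Finset.sum_range_add, ← Finset.sum_range_reflect (fun i ↦ f (n + i)),
    ← Finset.sum_add_distrib]
  refine Finset.sum_congr rfl fun i hi ↦ ?_
  have hin : i < n := Finset.mem_range.1 hi
  rw [show n + (n - 1 - i) = n + n - 1 - i by omega]

theorem sum_range_two_mul_add_one_eq_sum_add_reflect :
    ∑ i ∈ Finset.range (2 * n + 1), f i =
      ∑ i ∈ Finset.range n, (f i + f (2 * n - i)) + f n := by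
  rw [two_mul, add_right_comm, Finset.sum_range_add, Finset.sum_range_succ, add_right_comm,
    ← Finset.sum_range_reflect (fun i ↦ f (n + 1 + i)), ← Finset.sum_add_distrib]
  refine congrArg (· + f n) (Finset.sum_congr rfl fun i hi ↦ ?_)
  have hin : i < n := Finset.mem_range.1 hi
  rw [show n + 1 + (n - 1 - i) = n + n - i by omega]

end Folding

section Binomial

variable {S : Type*} [CommSemiring S] (u v : S)

theorem binomial_term_add_reflect {m k : ℕ} (hk : 2 * k ≤ m) :
    u ^ k * v ^ (m - k) * (m.choose k : S) +
        u ^ (m - k) * v ^ (m - (m - k)) * (m.choose (m - k) : S) =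
      (m.choose k : S) * (u * v) ^ k * (u ^ (m - 2 * k) + v ^ (m - 2 * k)) := by
  have hkm : k ≤ m := by omega
  rw [Nat.choose_symm hkm, Nat.sub_sub_self hkm, show m - k = k + (m - 2 * k) by omega]
  ring

theorem add_pow_two_mul_add_one (j : ℕ) :
    (u + v) ^ (2 * j + 1) =
      ∑ k ∈ Finset.range (j + 1), ((2 * j + 1).choose k : S) * (u * v) ^ k *
        (u ^ (2 * j + 1 - 2 * k) + v ^ (2 * j + 1 - 2 * k)) := by
  rw [add_pow, show 2 * j + 1 + 1 = 2 * (j + 1) by ring, sum_range_two_mul_eq_sum_add_reflect]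
  refine Finset.sum_congr rfl fun k hk ↦ ?_
  have hkj : k < j + 1 := Finset.mem_range.1 hk
  exact binomial_term_add_reflect u v (by omega)

theorem add_pow_two_mul (j : ℕ) :
    (u + v) ^ (2 * j) =
      ∑ k ∈ Finset.range j, ((2 * j).choose k : S) * (u * v) ^ k *
        (u ^ (2 * j - 2 * k) + v ^ (2 * j - 2 * k)) + ((2 * j).choose j : S) * (u * v) ^ j := by
  rw [add_pow, sum_range_two_mul_add_one_eq_sum_add_reflect]
  congr 1
  · refine Finset.sum_congr rfl fun k hk ↦ ?_
    have hkj : k < j := Finset.mem_range.1 hk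
    exact binomial_term_add_reflect u v (by omega)
  · rw [show 2 * j - j = j by omega, mul_pow, mul_comm]

end Binomial

section Trace

open QuadraticAlgebra

variable {R : Type*} [CommRing R]

theorem trace_pow_two_mul_add_one {a b : R} (z : QuadraticAlgebra R a b) (j : ℕ) :
    z.trace ^ (2 * j + 1) =
      ∑ k ∈ Finset.range (j + 1),
        ((2 * j + 1).choose k : R) * z.norm ^ k * (z ^ (2 * j + 1 - 2 * k)).trace := by
  apply algebraMap_injective (a := a) (b := b)
  simp only [map_pow, map_sum, map_mul, map_natCast, algebraMap_trace_eq_add_star,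
    algebraMap_norm_eq_mul_star, star_pow]
  exact add_pow_two_mul_add_one z (star z) j

theorem trace_pow_two_mul {a b : R} (z : QuadraticAlgebra R a b) (j : ℕ) :
    z.trace ^ (2 * j) =
      ∑ k ∈ Finset.range j,
        ((2 * j).choose k : R) * z.norm ^ k * (z ^ (2 * j - 2 * k)).trace +
      ((2 * j).choose j : R) * z.norm ^ j := by
  apply algebraMap_injective (a := a) (b := b)
  simp only [map_pow, map_add, map_sum, map_mul, map_natCast, algebraMap_trace_eq_add_star,
    algebraMap_norm_eq_mul_star, star_pow]
  exact add_pow_two_mul z (star z) j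

theorem norm_omega (a b : R) : (omega : QuadraticAlgebra R a b).norm = -a := by
  simp [norm_def]

theorem omega_pow_add_two {A : Type*} [CommSemiring A] (a b : A) (n : ℕ) :
    (omega : QuadraticAlgebra A a b) ^ (n + 2) = b • omega ^ (n + 1) + a • omega ^ n := by
  rw [pow_add, pow_two, omega_mul_omega_eq_add, mul_add, mul_smul_comm, mul_smul_comm, mul_one,
    ← pow_succ, add_comm]

theorem bL_eq_trace_omega_pow (x y : R) (n : ℕ) :
    bL x y n = ((omega : QuadraticAlgebra R y x) ^ n).trace := by
  induction n using Nat.twoStepInduction with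
  | zero => rw [bL, pow_zero, trace_one]
  | one => rw [bL, pow_one, trace_omega]
  | more n ih ih_succ =>
    rw [bL, ih, ih_succ, omega_pow_add_two, map_add, map_smul, map_smul, smul_eq_mul, smul_eq_mul]

end Trace

/-- Powers of Lucas polynomials: for `n ≥ 0` and `m ≥ 1`, if `m` is odd then
`L n ^ m = ∑_{k=0}^{⌊m/2⌋} C(m, k) (−y)^(kn) L (n(m−2k))`, and if `m` is even then
`L n ^ m = ∑_{k=0}^{m/2−1} C(m, k) (−y)^(kn) L (n(m−2k)) + C(m, m/2) (−y)^(mn/2)`. -/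
theorem lucas_powers {R : Type*} [CommRing R] (x y : R) :
    ∀ n m : ℕ, 1 ≤ m →
      (Odd m →
        bL x y n ^ m =
          ∑ k ∈ Finset.range (m / 2 + 1),
            (Nat.choose m k : R) * (-y) ^ (k * n) * bL x y (n * (m - 2 * k))) ∧
      (Even m →
        bL x y n ^ m =
          (∑ k ∈ Finset.range (m / 2),
            (Nat.choose m k : R) * (-y) ^ (k * n) * bL x y (n * (m - 2 * k))) +
          (Nat.choose m (m / 2) : R) * (-y) ^ (m * n / 2)) := by
  intro n m _
  have norm_pow (k : ℕ) :
      ((QuadraticAlgebra.omega : QuadraticAlgebra R y x) ^ n).norm ^ k = (-y) ^ (k * n) := by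
    rw [map_pow, norm_omega, ← pow_mul, mul_comm]
  constructor
  · rintro ⟨j, rfl⟩
    rw [show (2 * j + 1) / 2 = j by omega]
    simp only [bL_eq_trace_omega_pow, ← norm_pow, pow_mul]
    exact trace_pow_two_mul_add_one _ j
  · rintro ⟨j, rfl⟩
    rw [← two_mul, Nat.mul_div_cancel_left j two_pos, mul_assoc,
      Nat.mul_div_cancel_left (j * n) two_pos]
    simp only [bL_eq_trace_omega_pow, ← norm_pow, pow_mul _ n]
    exact trace_pow_two_mul _ j
end

section
/- Let R be a commutative ring and x, y ∈ R. Then for every n ≥ 0, ∑_{k=0}^{n} C(n, k)·x^k·y^{n−k}·F_k = F_{2n} and ∑_{k=0}^{n} C(n, k)·x^k·y^{n−k}·L_k = L_{2n}, where C(·,·) denotes the binomial coefficient. -/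
/-!
Let `S` be the shift operator on sequences. A solution `G` of the recurrence satisfies
`S² G = (x S + y) G`. As `S²` commutes with `x S + y`, this iterates to `S²ⁿ G = (x S + y)ⁿ G`;
expand the right-hand side by the binomial theorem and evaluate at `0`.
-/

open Finset

theorem smul_add_smul_one_pow {R A : Type*} [CommSemiring R] [Semiring A] [Algebra R A]
    (x y : R) (a : A) (n : ℕ) :
    (x • a + y • 1) ^ n =
      ∑ k ∈ range (n + 1), ((n.choose k : R) * x ^ k * y ^ (n - k)) • a ^ k := by
  have hcomm : Commute (x • a) (y • (1 : A)) :=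
    ((Commute.one_right a).smul_right y).smul_left x
  rw [hcomm.add_pow]
  refine sum_congr rfl fun k _ => ?_
  calc (x • a) ^ k * (y • 1) ^ (n - k) * (n.choose k : A)
      = (n.choose k : R) • (x ^ k * y ^ (n - k)) • a ^ k := by
        rw [smul_pow, smul_pow, one_pow, smul_mul_smul_comm, mul_one, ← Nat.cast_comm,
          ← nsmul_eq_mul, Nat.cast_smul_eq_nsmul]
    _ = ((n.choose k : R) * x ^ k * y ^ (n - k)) • a ^ k := by
        rw [smul_smul, mul_assoc]

section Semiring

variable {R M : Type*} [Semiring R] [AddCommMonoid M] [Module R M]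

theorem pow_apply_eq_pow_apply_of_commute {f g : Module.End R M} (hfg : Commute f g) {v : M}
    (hv : f v = g v) (n : ℕ) : (f ^ n) v = (g ^ n) v := by
  have hcomm : Function.Commute f g := LinearMap.congr_fun hfg.eq
  simpa only [Module.End.pow_apply] using hcomm.iterate_eq_of_map_eq n hv

theorem funLeft_succ_pow_apply (G : ℕ → M) (k m : ℕ) :
    (LinearMap.funLeft R M Nat.succ ^ k) G m = G (m + k) := by
  induction k generalizing m with
  | zero => rfl
  | succ k ih =>
    rw [pow_succ', Module.End.mul_apply, LinearMap.funLeft_apply, ih, Nat.succ_add_eq_add_succ]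

end Semiring

section CommSemiring

variable {R M : Type*} [CommSemiring R] [AddCommMonoid M] [Module R M] {x y : R}

theorem pow_two_mul_apply_eq_sum_choose {f : Module.End R M} {v : M}
    (hv : f (f v) = x • f v + y • v) (n : ℕ) :
    (f ^ (2 * n)) v =
      ∑ k ∈ range (n + 1), ((n.choose k : R) * x ^ k * y ^ (n - k)) • (f ^ k) v := by
  have hcomm : Commute (f ^ 2) (x • f + y • 1) :=
    (((Commute.refl f).pow_left 2).smul_right x).add_right ((Commute.one_right _).smul_right y)
  have hsq : (f ^ 2) v = (x • f + y • 1 : Module.End R M) v := by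
    simpa [pow_two] using hv
  calc (f ^ (2 * n)) v
      = ((x • f + y • 1 : Module.End R M) ^ n) v := by
        rw [pow_mul, pow_apply_eq_pow_apply_of_commute hcomm hsq]
    _ = ∑ k ∈ range (n + 1), ((n.choose k : R) * x ^ k * y ^ (n - k)) • (f ^ k) v := by
        simp only [smul_add_smul_one_pow, LinearMap.sum_apply, LinearMap.smul_apply]

theorem binomial_doubling_general {G : ℕ → M}
    (hG : ∀ n, G (n + 2) = x • G (n + 1) + y • G n) (n : ℕ) :
    ∑ k ∈ range (n + 1), ((n.choose k : R) * x ^ k * y ^ (n - k)) • G k = G (2 * n) := by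
  have hshift := pow_two_mul_apply_eq_sum_choose (f := LinearMap.funLeft R M Nat.succ)
    (funext hG) n
  simpa [funLeft_succ_pow_apply] using (congrFun hshift 0).symm

end CommSemiring

/-- Binomial doubling sums: `∑_{k=0}^{n} C(n, k) xᵏ y^(n−k) F k = F (2n)` and
`∑_{k=0}^{n} C(n, k) xᵏ y^(n−k) L k = L (2n)`. -/
theorem binomial_doubling {R : Type*} [CommRing R] (x y : R) :
    ∀ n : ℕ,
      (∑ k ∈ Finset.range (n + 1),
        (Nat.choose n k : R) * x ^ k * y ^ (n - k) * bF x y k = bF x y (2 * n)) ∧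
      (∑ k ∈ Finset.range (n + 1),
        (Nat.choose n k : R) * x ^ k * y ^ (n - k) * bL x y k = bL x y (2 * n)) := by
  have hF (n : ℕ) : bF x y (n + 2) = x • bF x y (n + 1) + y • bF x y n := rfl
  have hL (n : ℕ) : bL x y (n + 2) = x • bL x y (n + 1) + y • bL x y n := rfl
  exact fun n => ⟨binomial_doubling_general hF n, binomial_doubling_general hL n⟩
end

section
/- Let R be a commutative ring and x, y ∈ R. Then for every n ≥ 0, L_{n+2}² + y·L_{n+1}² = L_{2n+4} + y·L_{2n+2}. -/
section

variable {R : Type*} [CommRing R] (x y : R)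

theorem bL_zero : bL x y 0 = 2 := rfl

theorem bL_one : bL x y 1 = x := rfl

theorem bL_add_two (n : ℕ) : bL x y (n + 2) = x * bL x y (n + 1) + y * bL x y n := rfl

/-- Thus `L (m+1) * L (n+1) + y * L m * L n` depends only on `m + n`, and its value can be read off
at `n = 0`. -/
theorem bL_mul_add_mul_shift (m n : ℕ) :
    bL x y (m + 1) * bL x y (n + 2) + y * (bL x y m * bL x y (n + 1)) =
      bL x y (m + 2) * bL x y (n + 1) + y * (bL x y (m + 1) * bL x y n) := by
  rw [bL_add_two x y m, bL_add_two x y n]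
  ring

theorem lucas_sq_identity_general (m n : ℕ) :
    bL x y (m + 1) * bL x y (n + 1) + y * (bL x y m * bL x y n) =
      bL x y (m + n + 2) + y * bL x y (m + n) := by
  induction n generalizing m with
  | zero =>
    rw [zero_add, add_zero, bL_zero, bL_one, bL_add_two]
    ring
  | succ n ih =>
    rw [bL_mul_add_mul_shift, ih (m + 1), Nat.add_right_comm m 1 n, Nat.add_assoc m n 1]

end

/-- For every `n ≥ 0`, `L (n+2) ^ 2 + y L (n+1) ^ 2 = L (2n+4) + y L (2n+2)`. -/
theorem lucas_sq_identity {R : Type*} [CommRing R] (x y : R) :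
    ∀ n : ℕ,
      bL x y (n + 2) ^ 2 + y * bL x y (n + 1) ^ 2 =
        bL x y (2 * n + 4) + y * bL x y (2 * n + 2) := by
  intro n
  have index_eq : n + 1 + (n + 1) = 2 * n + 2 := by ring
  simpa only [← sq, index_eq] using lucas_sq_identity_general x y (n + 1) (n + 1)
end
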